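/- The trilinear map S³(f,g) := −P^{ls}(L_{X_f}∇)^j_{kl}(L_{X_g}∇)^k_{js} (the Flato–Lichnerowicz–Sternheimer operator, here bilinear) is a Chevalley 2-cocycle for the Poisson bracket: Σ_{cyclic u,v,w} [ {S³(u,v), w} + S³({u,v}, w) ] = 0. -/

import Mathlib

/- STATEMENT 12: the Flato–Lichnerowicz–Sternheimer operator S³(f,g) = −P^{ls}(L_{X_f}∇)^j_{kl}(L_{X_g}∇)^k_{js} is a Chevalley 2-cocycle for the Poisson bracket, in local coordinates on a chart of ℝ^d. -/
noncomputable section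
open scoped BigOperators

/-- points of the chart ℝ^d -/
abbrev E (d : ℕ) := Fin d → ℝ

/-- partial derivative in the `i`-th coordinate direction -/
def pd (d : ℕ) (i : Fin d) (f : E d → ℝ) (x : E d) : ℝ :=
  fderiv ℝ f x (Pi.single i 1)

/-- a tensor field with `p` covariant (lower) and `q` contravariant (upper) indices -/
abbrev Tensor (d p q : ℕ) := E d → (Fin p → Fin d) → (Fin q → Fin d) → ℝ

/-- Christoffel symbols: `Γ x k i j = Γ^k_{ij}(x)` -/
abbrev Christoffel (d : ℕ) := E d → Fin d → Fin d → Fin d → ℝ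

def SmoothChristoffel {d : ℕ} (Γ : Christoffel d) : Prop :=
  ∀ k i j, ContDiff ℝ (⊤ : ℕ∞) (fun x => Γ x k i j)

def Torsionfree {d : ℕ} (Γ : Christoffel d) : Prop :=
  ∀ x k i j, Γ x k i j = Γ x k j i

/-- covariant derivative of a `(p,q)`-tensor; the new covariant index comes first -/
def covD {d : ℕ} (Γ : Christoffel d) {p q : ℕ} (T : Tensor d p q) : Tensor d (p + 1) q :=
  fun x I K =>
    pd d (I 0) (fun y => T y (Fin.tail I) K) x
      - ∑ r : Fin p, ∑ m : Fin d,
          Γ x m (I 0) (Fin.tail I r) * T x (Function.update (Fin.tail I) r m) K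
      + ∑ r : Fin q, ∑ m : Fin d,
          Γ x (K r) (I 0) m * T x (Fin.tail I) (Function.update K r m)

/-- iterated covariant differential `∇^n f` of a function (`∇f = df`,
`∇^m f(X_1,…,X_m) = (∇_{X_1}∇^{m-1}f)(X_2,…,X_m)`) -/
def nablaF {d : ℕ} (Γ : Christoffel d) : (n : ℕ) → (E d → ℝ) → Tensor d n 0
  | 0, f => fun x _ _ => f x
  | (n + 1), f => covD Γ (nablaF Γ n f)

/-- curvature tensor: `curv Γ x s k l j = R^s_{klj}(x)` -/
def curv {d : ℕ} (Γ : Christoffel d) (x : E d) (s k l j : Fin d) : ℝ :=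
  pd d k (fun y => Γ y s l j) x - pd d l (fun y => Γ y s k j) x
    + ∑ t, (Γ x s k t * Γ x t l j - Γ x s l t * Γ x t k j)
/-- a bivector field as a `(0,2)`-tensor -/
def Ptensor {d : ℕ} (P : E d → Fin d → Fin d → ℝ) : Tensor d 0 2 :=
  fun x _ K => P x (K 0) (K 1)

/-- `∇_r P^{ij}` -/
def dP {d : ℕ} (Γ : Christoffel d) (P : E d → Fin d → Fin d → ℝ)
    (x : E d) (r i j : Fin d) : ℝ :=
  covD Γ (Ptensor P) x ![r] ![i, j]

/-- `∇²_{kl} P^{ij}` -/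
def d2P {d : ℕ} (Γ : Christoffel d) (P : E d → Fin d → Fin d → ℝ)
    (x : E d) (k l i j : Fin d) : ℝ :=
  covD Γ (covD Γ (Ptensor P)) x ![k, l] ![i, j]

/-- `∇_i f` -/
def d1f {d : ℕ} (Γ : Christoffel d) (f : E d → ℝ) (x : E d) (i : Fin d) : ℝ :=
  nablaF Γ 1 f x ![i] Fin.elim0

/-- `∇²_{kl} f` -/
def d2f {d : ℕ} (Γ : Christoffel d) (f : E d → ℝ) (x : E d) (k l : Fin d) : ℝ :=
  nablaF Γ 2 f x ![k, l] Fin.elim0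

/-- `∇³_{kli} f` -/
def d3f {d : ℕ} (Γ : Christoffel d) (f : E d → ℝ) (x : E d) (k l i : Fin d) : ℝ :=
  nablaF Γ 3 f x ![k, l, i] Fin.elim0

/-- `(L_{X_f}∇)^j_{kl} = P^{ij}∇³_{kli}f + ∇_kP^{ij}∇²_{li}f + ∇_lP^{ij}∇²_{ki}f
  + ∇²_{kl}P^{ij}∇_i f + R^j_{ikl}P^{si}∇_s f` -/
def LXnabla {d : ℕ} (Γ : Christoffel d) (P : E d → Fin d → Fin d → ℝ)
    (f : E d → ℝ) (x : E d) (j k l : Fin d) : ℝ :=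
  (∑ i, P x i j * d3f Γ f x k l i)
    + (∑ i, dP Γ P x k i j * d2f Γ f x l i)
    + (∑ i, dP Γ P x l i j * d2f Γ f x k i)
    + (∑ i, d2P Γ P x k l i j * d1f Γ f x i)
    + (∑ i, ∑ s, curv Γ x j i k l * P x s i * d1f Γ f x s)

/-- the Poisson bracket `{f,g} = P(df,dg)` -/
def pbr {d : ℕ} (P : E d → Fin d → Fin d → ℝ) (f g : E d → ℝ) (x : E d) : ℝ :=
  ∑ i, ∑ j, P x i j * pd d i f x * pd d j g x

/-- `S³(f,g) = −P^{ls}(L_{X_f}∇)^j_{kl}(L_{X_g}∇)^k_{js}` -/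
def S3 {d : ℕ} (Γ : Christoffel d) (P : E d → Fin d → Fin d → ℝ)
    (f g : E d → ℝ) (x : E d) : ℝ :=
  - ∑ l, ∑ s, ∑ k, ∑ j, P x l s * LXnabla Γ P f x j k l * LXnabla Γ P g x k j s

/-!
The operator `S³` is, up to sign, the cup product of the cochain `f ↦ L_{X_f}∇` with itself, with
values paired by contraction with `P`. This cochain is a cocycle: the Christoffel symbols transform
as a tensor up to the second derivatives of the vector field, so `X ↦ L_X ∇` is the sum of a
coboundary (the Lie derivative of a fixed tensor) and of the Hessian cocycle, and `f ↦ X_f` is a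
morphism of Lie algebras. The pairing is antisymmetric because `P` is, and it is invariant under
Hamiltonian vector fields because `L_{X_f} P = 0`. All of this holds for a matrix `P` over any
commutative algebra with commuting derivations.

The covariant formula for `L_{X_f}∇` is `(L_X∇)^j_{kl} = ∇²_{kl} X^j + R^j_{ikl} X^i`, with the
second-order Leibniz rule applied to the contraction `X = P(df, ·)`.
-/

section Algebra

open Matrix

attribute [local instance] LieRing.ofAssociativeRing

variable {k R ι : Type*} [CommRing k] [CommRing R] [Algebra k R]

/-- The entrywise action of a derivation on matrices. -/
def matDer (δ : Derivation k R R) : Matrix ι ι R →ₗ[k] Matrix ι ι R :=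
  (δ : R →ₗ[k] R).mapMatrix

@[simp]
theorem matDer_apply (δ : Derivation k R R) (M : Matrix ι ι R) (i j : ι) :
    matDer δ M i j = δ (M i j) := rfl

theorem matDer_smul (δ : Derivation k R R) (c : R) (M : Matrix ι ι R) :
    matDer δ (c • M) = δ c • M + c • matDer δ M := by
  ext i j
  simp [mul_comm, add_comm]

theorem matDer_lie_derivation (δ ε : Derivation k R R) (M : Matrix ι ι R) :
    matDer ⁅δ, ε⁆ M = matDer δ (matDer ε M) - matDer ε (matDer δ M) := by
  ext i j
  simp [Derivation.commutator_apply]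

variable (D : ι → Derivation k R R)

/-- The components `∂_i a` of the differential of `a`, where `∂_i = D i`. -/
def grad (a : R) : ι → R := fun i => D i a

/-- The Jacobian matrix of a vector field: its `(j, i)` entry is `∂_i X^j`. -/
def jac (X : ι → R) : Matrix ι ι R := of fun j i => D i (X j)

@[simp]
theorem jac_apply (X : ι → R) (i j : ι) : jac D X j i = D i (X j) := rfl

variable {D}

theorem coord_apply_comm (hD : ∀ i j, ⁅D i, D j⁆ = 0) (i j : ι) (a : R) :
    D i (D j a) = D j (D i a) := by
  rw [← sub_eq_zero, ← Derivation.commutator_apply, hD, Derivation.zero_apply]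

variable [Fintype ι]

theorem matDer_mul (δ : Derivation k R R) (M N : Matrix ι ι R) :
    matDer δ (M * N) = matDer δ M * N + M * matDer δ N := by
  ext i j
  simp [mul_apply, Finset.sum_add_distrib, mul_comm, add_comm]

theorem matDer_lie (δ : Derivation k R R) (M N : Matrix ι ι R) :
    matDer δ ⁅M, N⁆ = ⁅matDer δ M, N⁆ + ⁅M, matDer δ N⁆ := by
  simp only [Ring.lie_def, map_sub, matDer_mul]
  abel

theorem trace_matDer (δ : Derivation k R R) (M : Matrix ι ι R) :
    trace (matDer δ M) = δ (trace M) := by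
  simp [trace]

theorem derivation_comp_vecMul (δ : Derivation k R R) (s : ι → R) (M : Matrix ι ι R) :
    δ ∘ (s ᵥ* M) = (δ ∘ s) ᵥ* M + s ᵥ* matDer δ M := by
  ext j
  simp [vecMul, dotProduct, Finset.sum_add_distrib, mul_comm, add_comm]

variable (D)

/-- The vector field `X` with components `X i`, as the derivation `X^i ∂_i`. -/
def vecDer (X : ι → R) : Derivation k R R := ∑ i, X i • D i

/-- The components of the commutator of two vector fields. -/
def vecBracket (X Y : ι → R) : ι → R := vecDer D X ∘ Y - vecDer D Y ∘ X

theorem vecDer_apply (X : ι → R) (a : R) : vecDer D X a = ∑ i, X i * D i a := by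
  have h := congrFun (map_sum (Derivation.coeFnAddMonoidHom (R := k) (A := R) (M := R))
    (fun i => X i • D i) Finset.univ) a
  exact h.trans (by simp [Derivation.coeFnAddMonoidHom])

theorem vecDer_eq_dotProduct (X : ι → R) (a : R) : vecDer D X a = X ⬝ᵥ grad D a :=
  vecDer_apply D X a

theorem vecBracket_eq_sub_mulVec (X Y : ι → R) :
    vecBracket D X Y = vecDer D X ∘ Y - jac D X *ᵥ Y := by
  ext j
  simp [vecBracket, vecDer_apply, mulVec, dotProduct, mul_comm]

theorem lie_vecDer (δ : Derivation k R R) (Y : ι → R) :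
    ⁅δ, vecDer D Y⁆ = vecDer D (δ ∘ Y) + ∑ i, Y i • ⁅δ, D i⁆ := by
  ext a
  have sum_apply : (∑ i, Y i • ⁅δ, D i⁆) a = ∑ i, Y i * ⁅δ, D i⁆ a := vecDer_apply _ Y a
  simp only [Derivation.add_apply, sum_apply, Derivation.commutator_apply, vecDer_apply, map_sum,
    Derivation.leibniz, smul_eq_mul, Function.comp_apply, mul_sub, Finset.sum_add_distrib,
    Finset.sum_sub_distrib, mul_comm (D _ a)]
  ring

theorem vecDer_sub (X Y : ι → R) : vecDer D (X - Y) = vecDer D X - vecDer D Y := by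
  simp [vecDer, sub_smul]

variable {D}

theorem lie_coord_vecDer (hD : ∀ i j, ⁅D i, D j⁆ = 0) (X : ι → R) (l : ι) :
    ⁅D l, vecDer D X⁆ = vecDer D (D l ∘ X) := by
  simp [lie_vecDer, hD]

theorem coord_vecDer_apply (hD : ∀ i j, ⁅D i, D j⁆ = 0) (X : ι → R) (l : ι) (a : R) :
    D l (vecDer D X a) = vecDer D X (D l a) + ∑ i, jac D X i l * D i a := by
  rw [← sub_eq_iff_eq_add', ← Derivation.commutator_apply, lie_coord_vecDer hD]
  exact vecDer_apply D _ a

theorem matDer_coord_matDer_vecDer (hD : ∀ i j, ⁅D i, D j⁆ = 0) (X : ι → R) (l : ι)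
    (M : Matrix ι ι R) :
    matDer (D l) (matDer (vecDer D X) M)
      = matDer (vecDer D X) (matDer (D l) M) + ∑ i, jac D X i l • matDer (D i) M := by
  ext a b
  simp [coord_vecDer_apply hD, Matrix.sum_apply]

theorem vecDer_vecBracket (hD : ∀ i j, ⁅D i, D j⁆ = 0) (X Y : ι → R) :
    vecDer D (vecBracket D X Y) = ⁅vecDer D X, vecDer D Y⁆ := by
  have expand : vecDer D (vecDer D Y ∘ X) = ∑ i, Y i • vecDer D (D i ∘ X) := by
    calc ∑ i, vecDer D Y (X i) • D i = ∑ i, ∑ j, (Y j * D j (X i)) • D i := by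
          simp only [vecDer_apply, Finset.sum_smul]
      _ = ∑ j, Y j • ∑ i, D j (X i) • D i := by
          rw [Finset.sum_comm]
          simp only [Finset.smul_sum, smul_smul]
  have lie_coord (i : ι) : ⁅vecDer D X, D i⁆ = -vecDer D (D i ∘ X) := by
    rw [← lie_skew, lie_coord_vecDer hD]
  rw [lie_vecDer, vecBracket, vecDer_sub, expand, sub_eq_add_neg]
  simp only [lie_coord, smul_neg, Finset.sum_neg_distrib]

theorem grad_vecDer (hD : ∀ i j, ⁅D i, D j⁆ = 0) (X : ι → R) (a : R) :
    grad D (vecDer D X a) = vecDer D X ∘ grad D a + grad D a ᵥ* jac D X := by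
  ext l
  simp [grad, coord_vecDer_apply hD, vecMul, dotProduct, mul_comm]

theorem jac_vecBracket (hD : ∀ i j, ⁅D i, D j⁆ = 0) (X Y : ι → R) :
    jac D (vecBracket D X Y)
      = matDer (vecDer D X) (jac D Y) - matDer (vecDer D Y) (jac D X) - ⁅jac D X, jac D Y⁆ := by
  ext j i
  simp only [jac_apply, vecBracket, Pi.sub_apply, Function.comp_apply, map_sub,
    coord_vecDer_apply hD, Ring.lie_def, Matrix.sub_apply, matDer_apply, mul_apply, mul_comm]
  ring

variable (D)

/-- The Lie derivative along `X` of a tensor `A^j_{lk}`, stored as the matrices `A l` with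
`(j, k)` entry `A^j_{lk}`. -/
def lieTensor (X : ι → R) (A : ι → Matrix ι ι R) : ι → Matrix ι ι R :=
  fun l => matDer (vecDer D X) (A l) + ⁅A l, jac D X⁆ + ∑ i, jac D X i l • A i

/-- The second derivatives `∂_l ∂_k X^j` of a vector field, stored as in `lieTensor`. -/
def hessVec (X : ι → R) : ι → Matrix ι ι R := fun l => matDer (D l) (jac D X)

/-- The Lie derivative `(L_X ∇)^j_{lk}` of the connection with Christoffel symbols
`Γ^j_{lk} = G l j k`. The symbols transform like a tensor up to second derivatives of `X`. -/
def lieConn (G : ι → Matrix ι ι R) (X : ι → R) : ι → Matrix ι ι R :=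
  lieTensor D X G + hessVec D X

theorem lieTensor_add (X : ι → R) (A B : ι → Matrix ι ι R) :
    lieTensor D X (A + B) = lieTensor D X A + lieTensor D X B := by
  ext1 l
  classical
  simp only [lieTensor, Pi.add_apply, map_add, add_lie, smul_add, Finset.sum_add_distrib]
  abel

variable {D}

theorem sum_mul_apply_smul {M : Type*} [AddCommGroup M] [Module R M] (J K : Matrix ι ι R)
    (A : ι → M) (l : ι) :
    ∑ i, (J * K) i l • A i = ∑ i, K i l • ∑ m, J m i • A m := by
  simp only [mul_apply, Finset.sum_smul, Finset.smul_sum, smul_smul]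
  rw [Finset.sum_comm]
  simp only [mul_comm]

theorem lieTensor_vecBracket (hD : ∀ i j, ⁅D i, D j⁆ = 0) (X Y : ι → R)
    (A : ι → Matrix ι ι R) :
    lieTensor D (vecBracket D X Y) A
      = lieTensor D X (lieTensor D Y A) - lieTensor D Y (lieTensor D X A) := by
  ext1 l
  classical
  have jacobi : ⁅A l, ⁅jac D X, jac D Y⁆⁆
      = ⁅⁅A l, jac D X⁆, jac D Y⁆ - ⁅⁅A l, jac D Y⁆, jac D X⁆ := by
    rw [leibniz_lie, ← lie_skew (jac D X) ⁅A l, jac D Y⁆, sub_eq_add_neg]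
  have contract_lie : ∑ i, ⁅jac D X, jac D Y⁆ i l • A i
      = ∑ i, jac D Y i l • ∑ m, jac D X m i • A m
        - ∑ i, jac D X i l • ∑ m, jac D Y m i • A m := by
    simp only [Ring.lie_def, Matrix.sub_apply, sub_smul, Finset.sum_sub_distrib,
      sum_mul_apply_smul]
  simp only [lieTensor, vecDer_vecBracket hD, jac_vecBracket hD, matDer_lie_derivation,
    Pi.sub_apply, map_add, map_sum, matDer_lie, matDer_smul, add_lie, lie_sub, sum_lie, smul_lie,
    smul_add, Finset.sum_add_distrib, Matrix.sub_apply, sub_smul, Finset.sum_sub_distrib,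
    matDer_apply, jacobi, contract_lie]
  abel

theorem hessVec_vecBracket (hD : ∀ i j, ⁅D i, D j⁆ = 0) (X Y : ι → R) :
    hessVec D (vecBracket D X Y) = lieTensor D X (hessVec D Y) - lieTensor D Y (hessVec D X) := by
  ext1 l
  classical
  simp only [hessVec, lieTensor, jac_vecBracket hD, map_sub, matDer_lie,
    matDer_coord_matDer_vecDer hD, Pi.sub_apply]
  rw [← lie_skew (matDer (D l) (jac D Y))]
  abel

theorem lieConn_vecBracket (hD : ∀ i j, ⁅D i, D j⁆ = 0) (G : ι → Matrix ι ι R) (X Y : ι → R) :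
    lieConn D G (vecBracket D X Y)
      = lieTensor D X (lieConn D G Y) - lieTensor D Y (lieConn D G X) := by
  simp only [lieConn, lieTensor_vecBracket hD, hessVec_vecBracket hD, lieTensor_add]
  abel

/-- The bivector case of the Lie derivative along `X`. -/
def lieBivector (D : ι → Derivation k R R) (X : ι → R) (P : Matrix ι ι R) : Matrix ι ι R :=
  matDer (vecDer D X) P - jac D X * P - P * (jac D X)ᵀ

theorem vecBracket_vecMul (D : ι → Derivation k R R) (X ω : ι → R) (P : Matrix ι ι R) :
    vecBracket D X (ω ᵥ* P)
      = (vecDer D X ∘ ω + ω ᵥ* jac D X) ᵥ* P + ω ᵥ* lieBivector D X P := by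
  simp only [vecBracket_eq_sub_mulVec, derivation_comp_vecMul, lieBivector, add_vecMul,
    vecMul_sub, vecMul_vecMul, ← vecMul_transpose]
  abel

/-- The pairing of two tensors `A^j_{lk}`, `B^j_{sk}` over their upper and second lower indices:
its `(l, s)` entry is `A^j_{lk} B^k_{sj}`. -/
def traceForm (A B : ι → Matrix ι ι R) : Matrix ι ι R := of fun l s => trace (A l * B s)

/-- The full contraction `P^{ls} A^j_{lk} B^k_{sj}`. -/
def contraction (P : Matrix ι ι R) (A B : ι → Matrix ι ι R) : R := trace (P * (traceForm A B)ᵀ)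

theorem traceForm_transpose (A B : ι → Matrix ι ι R) : (traceForm A B)ᵀ = traceForm B A := by
  ext l s
  exact trace_mul_comm (A s) (B l)

theorem traceForm_lieTensor_add (D : ι → Derivation k R R) (X : ι → R) (A B : ι → Matrix ι ι R) :
    traceForm (lieTensor D X A) B + traceForm A (lieTensor D X B)
      = matDer (vecDer D X) (traceForm A B) + (jac D X)ᵀ * traceForm A B
        + traceForm A B * jac D X := by
  ext l s
  have trace_lie_invariant :
      trace (⁅A l, jac D X⁆ * B s) + trace (A l * ⁅B s, jac D X⁆) = 0 := by
    simp only [Ring.lie_def, sub_mul, mul_sub, trace_sub, ← mul_assoc]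
    rw [trace_mul_comm (A l * B s), ← mul_assoc]
    ring
  simp only [traceForm, lieTensor, Matrix.add_apply, of_apply, matDer_apply, mul_apply,
    transpose_apply, add_mul, mul_add, trace_add, Finset.sum_mul, Finset.mul_sum, trace_sum,
    smul_mul_assoc, mul_smul_comm, trace_smul, smul_eq_mul, ← trace_matDer, matDer_mul,
    mul_comm (trace _) (D _ _), jac_apply]
  linear_combination trace_lie_invariant

theorem contraction_sub_left (P : Matrix ι ι R) (A A' B : ι → Matrix ι ι R) :
    contraction P (A - A') B = contraction P A B - contraction P A' B := by
  have : traceForm (A - A') B = traceForm A B - traceForm A' B := by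
    ext
    simp [traceForm, sub_mul]
  simp [contraction, this, mul_sub]

theorem contraction_swap {P : Matrix ι ι R} (hP : Pᵀ = -P) (A B : ι → Matrix ι ι R) :
    contraction P A B = -contraction P B A := by
  rw [contraction, ← trace_transpose, transpose_mul, transpose_transpose, hP, mul_neg, trace_neg,
    trace_mul_comm, contraction, traceForm_transpose]

theorem vecDer_contraction (D : ι → Derivation k R R) (X : ι → R) (P : Matrix ι ι R)
    (A B : ι → Matrix ι ι R) :
    vecDer D X (contraction P A B)
      = contraction (lieBivector D X P) A B + contraction P (lieTensor D X A) B
        + contraction P A (lieTensor D X B) := by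
  have leibniz : contraction P (lieTensor D X A) B + contraction P A (lieTensor D X B)
      = trace (P * (matDer (vecDer D X) (traceForm A B) + (jac D X)ᵀ * traceForm A B
          + traceForm A B * jac D X)ᵀ) := by
    rw [← traceForm_lieTensor_add, transpose_add, mul_add, trace_add]
    rfl
  have matDer_transpose :
      matDer (vecDer D X) (traceForm A B)ᵀ = (matDer (vecDer D X) (traceForm A B))ᵀ := rfl
  rw [add_assoc, leibniz]
  simp only [contraction, ← trace_matDer, matDer_mul, matDer_transpose, lieBivector, sub_mul,
    mul_add, transpose_add, transpose_mul, transpose_transpose, trace_sub, trace_add, mul_assoc]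
  rw [trace_mul_comm (jac D X), mul_assoc]
  ring

section Poisson

variable (D : ι → Derivation k R R) (P : Matrix ι ι R)

/-- `P` is a Poisson bivector in the coordinates whose partial derivatives are the `D i`. -/
structure IsPoisson : Prop where
  skew : Pᵀ = -P
  jacobi : ∀ i j m,
    ∑ s, (P s i * D s (P j m) + P s j * D s (P m i) + P s m * D s (P i j)) = 0

/-- The Hamiltonian vector field `X_f^j = P^{ij} ∂_i f`. -/
def hamVec (f : R) : ι → R := grad D f ᵥ* P

/-- The Poisson bracket `{f, g} = P(df, dg)`, as the derivative of `g` along `X_f`. -/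
def poissonBr (f g : R) : R := vecDer D (hamVec D P f) g

/-- The Flato–Lichnerowicz–Sternheimer operator of the connection with Christoffel symbols
`Γ^j_{lk} = G l j k`. -/
def flsOp (G : ι → Matrix ι ι R) (f g : R) : R :=
  -contraction P (lieConn D G (hamVec D P f)) (lieConn D G (hamVec D P g))

variable {D P}

theorem IsPoisson.poissonBr_swap (hP : IsPoisson D P) (f g : R) :
    poissonBr D P f g = -poissonBr D P g f := by
  simp only [poissonBr, hamVec, vecDer_eq_dotProduct]
  rw [← dotProduct_mulVec, dotProduct_comm, ← vecMul_transpose, hP.skew, vecMul_neg,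
    neg_dotProduct]

theorem IsPoisson.matDer_vecDer_vecMul (hP : IsPoisson D P) (ω : ι → R) :
    matDer (vecDer D (ω ᵥ* P)) P
      = of (fun j s => (ω ᵥ* matDer (D s) P) j) * P
        + P * (of fun j s => (ω ᵥ* matDer (D s) P) j)ᵀ := by
  have skew_apply (i j : ι) : P i j = -P j i := congr_fun₂ hP.skew j i
  ext i j
  simp only [Matrix.add_apply, mul_apply, matDer_apply, vecDer_apply, of_apply, transpose_apply,
    vecMul, dotProduct, Finset.sum_mul, Finset.mul_sum, ← Finset.sum_add_distrib]
  rw [Finset.sum_comm]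
  conv_rhs => rw [Finset.sum_comm]
  refine Finset.sum_congr rfl fun a _ => ?_
  rw [← sub_eq_zero, ← Finset.sum_sub_distrib, ← mul_zero (-ω a), ← hP.jacobi a i j,
    Finset.mul_sum]
  refine Finset.sum_congr rfl fun s _ => ?_
  rw [skew_apply a s, skew_apply a j, skew_apply i s, map_neg]
  ring

theorem IsPoisson.lieBivector_hamVec (hP : IsPoisson D P) (hD : ∀ i j, ⁅D i, D j⁆ = 0) (f : R) :
    lieBivector D (hamVec D P f) P = 0 := by
  set H : Matrix ι ι R := jac D (grad D f)
  set K : Matrix ι ι R := of fun j s => (grad D f ᵥ* matDer (D s) P) j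
  have H_symm : Hᵀ = H := by
    ext i j
    exact coord_apply_comm hD i j f
  have jac_hamVec : jac D (hamVec D P f) = -(P * H) + K := by
    rw [← neg_mul, ← hP.skew]
    ext j i
    exact (congrFun (derivation_comp_vecMul (D i) (grad D f) P) j).trans
      (congrArg (· + K j i) (congrFun (mulVec_transpose P _).symm j))
  rw [lieBivector, hamVec, hP.matDer_vecDer_vecMul, ← hamVec, jac_hamVec, transpose_add,
    transpose_neg, transpose_mul, H_symm, hP.skew]
  noncomm_ring

theorem IsPoisson.hamVec_poissonBr (hP : IsPoisson D P) (hD : ∀ i j, ⁅D i, D j⁆ = 0) (f g : R) :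
    hamVec D P (poissonBr D P f g) = vecBracket D (hamVec D P f) (hamVec D P g) := by
  rw [hamVec.eq_1 D P g, vecBracket_vecMul, hP.lieBivector_hamVec hD, vecMul_zero, add_zero,
    ← grad_vecDer hD]
  rfl

theorem IsPoisson.flsOp_poissonBr (hP : IsPoisson D P) (hD : ∀ i j, ⁅D i, D j⁆ = 0)
    (G : ι → Matrix ι ι R) (f g h : R) :
    flsOp D P G (poissonBr D P f g) h
      = contraction P (lieTensor D (hamVec D P g) (lieConn D G (hamVec D P f)))
          (lieConn D G (hamVec D P h))
        - contraction P (lieTensor D (hamVec D P f) (lieConn D G (hamVec D P g)))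
          (lieConn D G (hamVec D P h)) := by
  rw [flsOp, hP.hamVec_poissonBr hD, lieConn_vecBracket hD, contraction_sub_left, neg_sub]

theorem IsPoisson.poissonBr_flsOp (hP : IsPoisson D P) (hD : ∀ i j, ⁅D i, D j⁆ = 0)
    (G : ι → Matrix ι ι R) (f g h : R) :
    poissonBr D P (flsOp D P G f g) h
      = contraction P (lieTensor D (hamVec D P h) (lieConn D G (hamVec D P f)))
          (lieConn D G (hamVec D P g))
        - contraction P (lieTensor D (hamVec D P h) (lieConn D G (hamVec D P g)))
          (lieConn D G (hamVec D P f)) := by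
  rw [hP.poissonBr_swap, poissonBr, flsOp, map_neg, neg_neg, vecDer_contraction,
    hP.lieBivector_hamVec hD, contraction_swap hP.skew (lieConn D G (hamVec D P f))]
  simp [contraction, sub_eq_add_neg]

theorem IsPoisson.flsOp_cocycle (hP : IsPoisson D P) (hD : ∀ i j, ⁅D i, D j⁆ = 0)
    (G : ι → Matrix ι ι R) (u v w : R) :
    (poissonBr D P (flsOp D P G u v) w + flsOp D P G (poissonBr D P u v) w)
      + (poissonBr D P (flsOp D P G v w) u + flsOp D P G (poissonBr D P v w) u)
      + (poissonBr D P (flsOp D P G w u) v + flsOp D P G (poissonBr D P w u) v) = 0 := by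
  simp only [hP.flsOp_poissonBr hD, hP.poissonBr_flsOp hD]
  ring

end Poisson

section Covariant

/-- The covariant derivative `∂X^j + Γ^j_m X^m` of a vector field in the direction with derivation
`δ` and connection matrix `g`. -/
def covVec (δ : Derivation k R R) (g : Matrix ι ι R) (X : ι → R) : ι → R := δ ∘ X + g *ᵥ X

/-- The covariant derivative of a one-form, with conventions as in `covVec`. -/
def covForm (δ : Derivation k R R) (g : Matrix ι ι R) (ω : ι → R) : ι → R := δ ∘ ω - ω ᵥ* g

/-- The covariant derivative of a bivector, with conventions as in `covVec`. -/
def covBivector (δ : Derivation k R R) (g T : Matrix ι ι R) : Matrix ι ι R :=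
  matDer δ T + g * T + T * gᵀ

theorem covVec_add (δ : Derivation k R R) (g : Matrix ι ι R) (X Y : ι → R) :
    covVec δ g (X + Y) = covVec δ g X + covVec δ g Y := by
  ext j
  simp only [covVec, mulVec_add, Pi.add_apply, Function.comp_apply, map_add]
  ring

theorem covVec_vecMul (δ : Derivation k R R) (g : Matrix ι ι R) (ω : ι → R) (T : Matrix ι ι R) :
    covVec δ g (ω ᵥ* T) = covForm δ g ω ᵥ* T + ω ᵥ* covBivector δ g T := by
  simp only [covVec, covForm, covBivector, derivation_comp_vecMul, sub_vecMul, vecMul_add,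
    vecMul_vecMul, ← vecMul_transpose]
  abel

/-- The component `∇²_{ab} T` of the second covariant differential of a field `T`, where `nabla i`
is the covariant derivative along `∂_i` on fields of the type of `T`. -/
def secondCov {M : Type*} [AddCommGroup M] [Module R M] (G : ι → Matrix ι ι R)
    (nabla : ι → M → M) (a b : ι) (T : M) : M :=
  nabla a (nabla b T) - ∑ m, G a m b • nabla m T

theorem secondCov_vecMul (D : ι → Derivation k R R) (G : ι → Matrix ι ι R) (a b : ι) (ω : ι → R)
    (T : Matrix ι ι R) :
    secondCov G (fun i => covVec (D i) (G i)) a b (ω ᵥ* T)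
      = secondCov G (fun i => covForm (D i) (G i)) a b ω ᵥ* T
        + covForm (D b) (G b) ω ᵥ* covBivector (D a) (G a) T
        + covForm (D a) (G a) ω ᵥ* covBivector (D b) (G b) T
        + ω ᵥ* secondCov G (fun i => covBivector (D i) (G i)) a b T := by
  simp only [secondCov, covVec_vecMul, covVec_add, sub_vecMul, vecMul_sub, sum_vecMul, vecMul_sum,
    smul_vecMul, vecMul_smul, smul_add, Finset.sum_add_distrib]
  abel

/-- The curvature matrices of a connection: `R^s_{abj}` is the `(s, j)` entry of
`curvature D G a b`. -/
def curvature (D : ι → Derivation k R R) (G : ι → Matrix ι ι R) (a b : ι) : Matrix ι ι R :=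
  matDer (D a) (G b) - matDer (D b) (G a) + ⁅G a, G b⁆

theorem lieConn_eq_secondCov {D : ι → Derivation k R R} (hD : ∀ i j, ⁅D i, D j⁆ = 0)
    {G : ι → Matrix ι ι R} (hG : ∀ a j b, G a j b = G b j a) (X : ι → R) (a b j : ι) :
    lieConn D G X b j a
      = secondCov G (fun i => covVec (D i) (G i)) a b X j + ∑ i, curvature D G i a j b * X i := by
  have quadratic_left :
      ∑ m, G a j m * ∑ t, G b m t * X t = ∑ i, (∑ t, G a j t * G i t b) * X i := by
    simp only [Finset.sum_mul, Finset.mul_sum, hG _ _ b]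
    rw [Finset.sum_comm]
    simp only [mul_assoc]
  have quadratic_right :
      ∑ m, G a m b * ∑ t, G m j t * X t = ∑ i, (∑ t, G i j t * G a t b) * X i := by
    simp only [Finset.sum_mul, Finset.mul_sum]
    rw [Finset.sum_comm]
    refine Finset.sum_congr rfl fun i _ => Finset.sum_congr rfl fun t _ => ?_
    rw [hG i]
    ring
  simp only [lieConn, lieTensor, hessVec, secondCov, covVec, curvature, jac, Ring.lie_def,
    vecDer_apply, Pi.add_apply, Pi.sub_apply, Finset.sum_apply, Pi.smul_apply, smul_eq_mul,
    Function.comp_apply, mulVec, dotProduct, map_sum, map_add, Derivation.leibniz,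
    Matrix.add_apply, Matrix.sub_apply, matDer_apply, of_apply, mul_apply, Matrix.sum_apply,
    Matrix.smul_apply, mul_add, add_mul, sub_mul, Finset.sum_add_distrib,
    Finset.sum_sub_distrib, quadratic_left, quadratic_right]
  rw [coord_apply_comm hD a b]
  -- Separate passes: together these rewrites would loop.
  simp only [hG b _ a, mul_comm (X _), mul_comm (D _ (X _))]
  simp only [hG _ j b]
  simp only [hG _ j a]
  ring

end Covariant

end Algebra

section Chart

open Matrix

/-- The algebra of smooth functions on the chart. -/
def smoothFun (d : ℕ) : Subalgebra ℝ (E d → ℝ) where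
  carrier := {f | ContDiff ℝ (⊤ : ℕ∞) f}
  mul_mem' {f g} (hf : ContDiff ℝ (⊤ : ℕ∞) f) (hg : ContDiff ℝ (⊤ : ℕ∞) g) := hf.mul hg
  add_mem' {f g} (hf : ContDiff ℝ (⊤ : ℕ∞) f) (hg : ContDiff ℝ (⊤ : ℕ∞) g) := hf.add hg
  algebraMap_mem' c := show ContDiff ℝ (⊤ : ℕ∞) fun _ : E d => c from contDiff_const

variable {d : ℕ}

theorem smoothFun.contDiff (f : smoothFun d) : ContDiff ℝ (⊤ : ℕ∞) f.1 := f.2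

theorem smoothFun.differentiableAt (f : smoothFun d) (x : E d) : DifferentiableAt ℝ f.1 x :=
  (smoothFun.contDiff f).differentiable (by simp) x

theorem contDiff_pd (i : Fin d) {f : E d → ℝ} (hf : ContDiff ℝ (⊤ : ℕ∞) f) :
    ContDiff ℝ (⊤ : ℕ∞) (pd d i f) :=
  (hf.fderiv_right (m := (⊤ : ℕ∞)) (by simp)).clm_apply contDiff_const

/-- The partial derivative `pd d i` as a derivation of the algebra of smooth functions. -/
def pdDer (d : ℕ) (i : Fin d) : Derivation ℝ (smoothFun d) (smoothFun d) :=
  Derivation.mk'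
    { toFun := fun f => ⟨pd d i f.1, contDiff_pd i f.2⟩
      map_add' := fun f g => by
        ext x
        exact DFunLike.congr_fun
          (fderiv_add (smoothFun.differentiableAt f x) (smoothFun.differentiableAt g x)) _
      map_smul' := fun c f => by
        ext x
        exact DFunLike.congr_fun (fderiv_const_smul (smoothFun.differentiableAt f x) c) _ }
    fun f g => by
      ext x
      exact DFunLike.congr_fun
        (fderiv_mul (smoothFun.differentiableAt f x) (smoothFun.differentiableAt g x)) _

@[simp]
theorem coe_pdDer (i : Fin d) (f : smoothFun d) : (pdDer d i f : E d → ℝ) = pd d i f := rfl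

theorem lie_pdDer (i j : Fin d) : ⁅pdDer d i, pdDer d j⁆ = 0 := by
  ext f x
  have hf := smoothFun.contDiff f
  have hf' : DifferentiableAt ℝ (fderiv ℝ f.1) x :=
    ((hf.fderiv_right (m := (⊤ : ℕ∞)) (by simp)).differentiable (by simp)).differentiableAt
  have symm : IsSymmSndFDerivAt ℝ f.1 x :=
    hf.contDiffAt.isSymmSndFDerivAt
      (by simpa using WithTop.coe_le_coe.2 (le_top : (2 : ℕ∞) ≤ ⊤))
  rw [Derivation.commutator_apply]
  change fderiv ℝ (fun y => fderiv ℝ f.1 y _) x _ - fderiv ℝ (fun y => fderiv ℝ f.1 y _) x _ = 0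
  rw [fderiv_clm_apply hf' (differentiableAt_const _),
    fderiv_clm_apply hf' (differentiableAt_const _), sub_eq_zero]
  simpa using symm _ _

theorem smoothFun.sum_apply {α : Type*} (s : Finset α) (f : α → smoothFun d) (x : E d) :
    (∑ i ∈ s, f i).1 x = ∑ i ∈ s, (f i).1 x := by
  simp

/-- The matrices of smooth functions with `(j, i)` entry `Γ^j_{ai}`. -/
def connMatrix {Γ : Christoffel d} (hΓ : SmoothChristoffel Γ) (a : Fin d) :
    Matrix (Fin d) (Fin d) (smoothFun d) :=
  of fun j i => ⟨fun x => Γ x j a i, hΓ j a i⟩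

/-- The components of a smooth bivector field as a matrix of smooth functions. -/
def bivectorMatrix {P : E d → Fin d → Fin d → ℝ}
    (hP : ∀ i j, ContDiff ℝ (⊤ : ℕ∞) (fun x => P x i j)) :
    Matrix (Fin d) (Fin d) (smoothFun d) :=
  of fun i j => ⟨fun x => P x i j, hP i j⟩

variable {Γ : Christoffel d} (hΓ : SmoothChristoffel Γ) {P : E d → Fin d → Fin d → ℝ}
  (hP : ∀ i j, ContDiff ℝ (⊤ : ℕ∞) (fun x => P x i j)) (f g : smoothFun d)

@[simp]
theorem coe_connMatrix_apply (a j i : Fin d) :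
    (connMatrix hΓ a j i : E d → ℝ) = fun x => Γ x j a i := rfl

@[simp]
theorem coe_bivectorMatrix_apply (i j : Fin d) :
    (bivectorMatrix hP i j : E d → ℝ) = fun x => P x i j := rfl

theorem coe_covForm_apply (a : Fin d) (ω : Fin d → smoothFun d) (i : Fin d) (x : E d) :
    (covForm (pdDer d a) (connMatrix hΓ a) ω i).1 x
      = pd d a (ω i) x - ∑ m, Γ x m a i * (ω m).1 x := by
  simp [covForm, vecMul, dotProduct, mul_comm]

theorem coe_covBivector_apply (a : Fin d) (T : Matrix (Fin d) (Fin d) (smoothFun d))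
    (i j : Fin d) (x : E d) :
    (covBivector (pdDer d a) (connMatrix hΓ a) T i j).1 x
      = pd d a (T i j) x + ∑ m, Γ x i a m * (T m j).1 x + ∑ m, Γ x j a m * (T i m).1 x := by
  simp [covBivector, mul_apply, mul_comm]

theorem nablaF_one :
    nablaF Γ 1 f = fun x I _ => (grad (pdDer d) f (I 0)).1 x := by
  ext x I K
  simp [nablaF, covD, grad]

theorem nablaF_two :
    nablaF Γ 2 f = fun x I _ =>
      (covForm (pdDer d (I 0)) (connMatrix hΓ (I 0)) (grad (pdDer d) f) (I 1)).1 x := by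
  ext x I K
  rw [nablaF, nablaF_one, coe_covForm_apply]
  simp [covD, Fin.tail]

theorem nablaF_three :
    nablaF Γ 3 f = fun x I _ =>
      (secondCov (connMatrix hΓ) (fun i => covForm (pdDer d i) (connMatrix hΓ i)) (I 0) (I 1)
        (grad (pdDer d) f) (I 2)).1 x := by
  ext x I K
  rw [nablaF, nablaF_two hΓ]
  simp [covD, secondCov, Fin.sum_univ_succ, Fin.tail, coe_covForm_apply hΓ (I 0), sub_sub, add_comm]

theorem covD_Ptensor :
    covD Γ (Ptensor P) = fun x I K =>
      (covBivector (pdDer d (I 0)) (connMatrix hΓ (I 0)) (bivectorMatrix hP) (K 0) (K 1)).1 x := by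
  ext x I K
  simp [covD, Ptensor, coe_covBivector_apply, Fin.sum_univ_succ, add_assoc]

theorem covD_covD_Ptensor :
    covD Γ (covD Γ (Ptensor P)) = fun x I K =>
      (secondCov (connMatrix hΓ) (fun i => covBivector (pdDer d i) (connMatrix hΓ i)) (I 0) (I 1)
        (bivectorMatrix hP) (K 0) (K 1)).1 x := by
  ext x I K
  rw [covD_Ptensor hΓ hP]
  simp [covD, secondCov, Fin.sum_univ_succ, Fin.tail, coe_covBivector_apply hΓ (I 0),
    Matrix.sum_apply, sub_add_eq_add_sub, add_assoc]

theorem curv_eq_curvature (x : E d) (s k l j : Fin d) :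
    curv Γ x s k l j = (curvature (pdDer d) (connMatrix hΓ) k l s j).1 x := by
  classical
  simp [curv, curvature, Ring.lie_def, mul_apply, Finset.sum_sub_distrib]

theorem LXnabla_eq_lieConn (hT : Torsionfree Γ) (x : E d) (j a b : Fin d) :
    LXnabla Γ P f x j a b
      = (lieConn (pdDer d) (connMatrix hΓ) (hamVec (pdDer d) (bivectorMatrix hP) f) b j a).1 x := by
  have connMatrix_symm (a j b : Fin d) : connMatrix hΓ a j b = connMatrix hΓ b j a := by
    ext x
    exact hT x j a b
  rw [lieConn_eq_secondCov (D := pdDer d) (G := connMatrix hΓ) lie_pdDer connMatrix_symm, hamVec,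
    secondCov_vecMul]
  simp only [LXnabla, d2P, covD_covD_Ptensor hΓ hP]
  simp only [d1f, d2f, d3f, dP, nablaF_one, nablaF_two hΓ, nablaF_three hΓ, covD_Ptensor hΓ hP,
    curv_eq_curvature hΓ, vecMul, dotProduct, Pi.add_apply, Subalgebra.coe_add, Subalgebra.coe_mul,
    Pi.mul_apply, smoothFun.sum_apply, coe_bivectorMatrix_apply, Finset.mul_sum,
    Matrix.cons_val, mul_assoc, mul_comm, mul_left_comm]

theorem pbr_eq_poissonBr : pbr P f g = (poissonBr (pdDer d) (bivectorMatrix hP) f g).1 := by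
  ext x
  simp only [pbr, poissonBr, hamVec, vecDer_apply, vecMul, dotProduct, grad, Finset.sum_mul,
    smoothFun.sum_apply, Subalgebra.coe_mul, Pi.mul_apply, coe_pdDer, coe_bivectorMatrix_apply]
  rw [Finset.sum_comm]
  simp only [mul_comm (P x _ _)]

theorem S3_eq_flsOp (hT : Torsionfree Γ) :
    S3 Γ P f g = (flsOp (pdDer d) (bivectorMatrix hP) (connMatrix hΓ) f g).1 := by
  ext x
  simp only [S3, LXnabla_eq_lieConn hΓ hP f hT, LXnabla_eq_lieConn hΓ hP g hT, flsOp, contraction,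
    trace, traceForm, diag_apply, mul_apply, transpose_apply, of_apply, Finset.mul_sum,
    Subalgebra.coe_neg, Subalgebra.coe_mul, Pi.neg_apply, Pi.mul_apply, smoothFun.sum_apply,
    coe_bivectorMatrix_apply, neg_inj]
  refine Finset.sum_congr rfl fun l _ => Finset.sum_congr rfl fun s _ => ?_
  rw [Finset.sum_comm]
  simp only [mul_assoc]

theorem isPoisson_bivectorMatrix (hskew : ∀ x i j, P x i j = -P x j i)
    (hjacobi : ∀ x i j k, ∑ s, (P x s i * pd d s (fun z => P z j k) x
        + P x s j * pd d s (fun z => P z k i) x + P x s k * pd d s (fun z => P z i j) x) = 0) :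
    IsPoisson (pdDer d) (bivectorMatrix hP) where
  skew := by
    ext i j x
    exact hskew x j i
  jacobi i j m := by
    ext x
    exact (smoothFun.sum_apply _ _ x).trans (hjacobi x i j m)

end Chart

/-- the Chevalley cocycle identity
`Σ_{cyclic} {S³(u,v), w} + S³({u,v}, w) = 0`. -/
theorem S3_is_chevalley_cocycle
    (d : ℕ) (Γ : Christoffel d) (hΓ : SmoothChristoffel Γ) (hT : Torsionfree Γ)
    (P : E d → Fin d → Fin d → ℝ) (hPsm : ∀ i j, ContDiff ℝ (⊤ : ℕ∞) (fun x => P x i j))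
    (hPskew : ∀ x i j, P x i j = - P x j i)
    (hPoisson : ∀ x i j k,
      ∑ s, (P x s i * pd d s (fun z => P z j k) x
            + P x s j * pd d s (fun z => P z k i) x
            + P x s k * pd d s (fun z => P z i j) x) = 0)
    (u v w : E d → ℝ)
    (hu : ContDiff ℝ (⊤ : ℕ∞) u) (hv : ContDiff ℝ (⊤ : ℕ∞) v) (hw : ContDiff ℝ (⊤ : ℕ∞) w)
    (x : E d) :
    (pbr P (S3 Γ P u v) w x + S3 Γ P (pbr P u v) w x)
      + (pbr P (S3 Γ P v w) u x + S3 Γ P (pbr P v w) u x)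
      + (pbr P (S3 Γ P w u) v x + S3 Γ P (pbr P w u) v x) = 0 := by
  lift u to smoothFun d using hu
  lift v to smoothFun d using hv
  lift w to smoothFun d using hw
  have cocycle := (isPoisson_bivectorMatrix hPsm hPskew hPoisson).flsOp_cocycle lie_pdDer
    (connMatrix hΓ) u v w
  simp only [S3_eq_flsOp hΓ hPsm _ _ hT, pbr_eq_poissonBr hPsm]
  exact congrFun (congrArg Subtype.val cocycle) x
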